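/- Let T = (U, V) be a nondegenerate t-structure in a triangulated category T with arbitrary coproducts, with heart H and cohomological functor H⁰ : T → H. Then H⁰ preserves coproducts (where coproducts in H are computed as H⁰ applied to the coproduct in T) if and only if V is closed under coproducts in T. -/

import Mathlib

open CategoryTheory Limits Pretriangulated

universe w v u

variable {C : Type u} [Category.{v} C] [Preadditive C] [HasZeroObject C] [HasShift C ℤ]
  [∀ n : ℤ, (shiftFunctor C n).Additive] [Pretriangulated C]

/-- `X` is a direct summand (retract) of `Y`. -/
def IsSummand {C : Type u} [Category.{v} C] (X Y : C) : Prop :=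
  ∃ (i : X ⟶ Y) (r : Y ⟶ X), i ≫ r = 𝟙 X

/-- A torsion pair `(𝒰, 𝒱)` in a triangulated category: both classes are closed under
direct summands, all morphisms from `𝒰` to `𝒱` vanish, and every object fits
in a triangle `U ⟶ X ⟶ V ⟶ U⟦1⟧` with `U ∈ 𝒰` and `V ∈ 𝒱`. -/
structure TorsionPair (𝒰 𝒱 : Set C) : Prop where
  summand_left : ∀ ⦃X Y : C⦄, IsSummand X Y → Y ∈ 𝒰 → X ∈ 𝒰
  summand_right : ∀ ⦃X Y : C⦄, IsSummand X Y → Y ∈ 𝒱 → X ∈ 𝒱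
  hom_zero : ∀ ⦃X Y : C⦄, X ∈ 𝒰 → Y ∈ 𝒱 → ∀ f : X ⟶ Y, f = 0
  exists_triangle : ∀ X : C, ∃ (U V : C) (_ : U ∈ 𝒰) (_ : V ∈ 𝒱)
    (f : U ⟶ X) (g : X ⟶ V) (h : V ⟶ U⟦(1 : ℤ)⟧), Triangle.mk f g h ∈ distTriang C


/-- Functorial truncation data for a torsion pair `(𝒰, 𝒱)`: truncation functors `u` and `v`,
right resp. left adjoint to the inclusions, with counit `ι`, unit `π` and connecting maps
forming the truncation triangles `u(X) ⟶ X ⟶ v(X) ⟶ u(X)⟦1⟧`. -/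
structure TruncationFunctors (𝒰 𝒱 : Set C) where
  u : C ⥤ C
  v : C ⥤ C
  ι : u ⟶ 𝟭 C
  π : 𝟭 C ⟶ v
  δ : ∀ X : C, v.obj X ⟶ (u.obj X)⟦(1 : ℤ)⟧
  mem_u : ∀ X : C, u.obj X ∈ 𝒰
  mem_v : ∀ X : C, v.obj X ∈ 𝒱
  triangle : ∀ X : C, Triangle.mk (ι.app X) (π.app X) (δ X) ∈ distTriang C
  adj_u : ∀ (A X : C), A ∈ 𝒰 → Function.Bijective (fun g : A ⟶ u.obj X => g ≫ ι.app X)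
  adj_v : ∀ (X B : C), B ∈ 𝒱 → Function.Bijective (fun g : v.obj X ⟶ B => π.app X ≫ g)

/-- The cohomological functor `H⁰(X) = v(u(X⟦1⟧)⟦-1⟧)` associated to a t-structure with
truncation functors `d`. -/
def H0 {𝒰 𝒱 : Set C} (d : TruncationFunctors 𝒰 𝒱) : C ⥤ C :=
  shiftFunctor C (1 : ℤ) ⋙ d.u ⋙ shiftFunctor C (-1 : ℤ) ⋙ d.v

/-- The heart `𝒰⟦-1⟧ ∩ 𝒱` of the t-structure `(𝒰, 𝒱)`. -/
def heart (𝒰 𝒱 : Set C) : Set C := {X : C | X⟦(1 : ℤ)⟧ ∈ 𝒰 ∧ X ∈ 𝒱}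

/-!
The objects of `𝒱` are exactly those whose cohomology vanishes in all negative degrees: if it
vanishes for `X`, then every desuspension of `u(X)` lies in `𝒰`, and nondegeneracy kills `u(X)`.
So if `H⁰` preserves coproducts, a coproduct of objects of `𝒱` is again in `𝒱`. Conversely, as a
reflection, `v` turns coproducts into coproducts relative to `𝒱`; if `𝒱` is closed under
coproducts these are coproducts in the ambient category, the five lemma applied to the truncation
triangles shows that `u` preserves coproducts too, and reflecting once more gives `H⁰`.
-/

/-- The morphisms `ι j : A j ⟶ P` satisfy the universal property of a coproduct with respect to
all targets in `𝒲`. Neither `P` nor the `A j` need to lie in `𝒲`; when they do, `P` is their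
coproduct in the full subcategory `𝒲`. -/
def IsCoproductIn {C : Type u} [Category.{v} C] (𝒲 : Set C) {J : Type w} {A : J → C} {P : C}
    (ι : ∀ j, A j ⟶ P) : Prop :=
  ∀ W ∈ 𝒲, ∀ f : ∀ j, A j ⟶ W, ∃! g : P ⟶ W, ∀ j, ι j ≫ g = f j

namespace IsCoproductIn

variable {D : Type u} [Category.{v} D] {𝒲 𝒲' : Set D} {J : Type w} {A : J → D} {P : D}
  {ι : ∀ j, A j ⟶ P}

lemma anti (hι : IsCoproductIn 𝒲 ι) (hle : 𝒲' ⊆ 𝒲) : IsCoproductIn 𝒲' ι :=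
  fun W hW => hι W (hle hW)

lemma hom_ext (hι : IsCoproductIn 𝒲 ι) {W : D} (hW : W ∈ 𝒲) {f g : P ⟶ W}
    (hfg : ∀ j, ι j ≫ f = ι j ≫ g) : f = g :=
  (hι W hW fun j => ι j ≫ g).unique hfg fun _ => rfl

lemma isZero [HasZeroMorphisms D] (hι : IsCoproductIn 𝒲 ι) (hP : P ∈ 𝒲)
    (hA : ∀ j, IsZero (A j)) : IsZero P :=
  (IsZero.iff_id_eq_zero P).2 (hι.hom_ext hP fun j => (hA j).eq_of_src _ _)

end IsCoproductIn

section CoproductOfTriangles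

variable {J : Type w} {T : J → Triangle C} {T' : Triangle C}

lemma eq_zero_of_hom₃_comp_eq_zero (hT : ∀ j, T j ∈ distTriang C) (hT' : T' ∈ distTriang C)
    (φ : ∀ j, T j ⟶ T')
    (h₁ : IsColimit (Cofan.mk T'.obj₁ fun j => (φ j).hom₁))
    (h₂ : IsColimit (Cofan.mk T'.obj₂ fun j => (φ j).hom₂))
    {W : C} (f : T'.obj₃ ⟶ W) (hf : ∀ j, (φ j).hom₃ ≫ f = 0) : f = 0 := by
  have h₁' := isColimitCofanMkObjOfIsColimit (shiftFunctor C (1 : ℤ)) _ _ h₁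
  have h₂' := isColimitCofanMkObjOfIsColimit (shiftFunctor C (1 : ℤ)) _ _ h₂
  have hf₂ : T'.mor₂ ≫ f = 0 := Cofan.IsColimit.hom_ext h₂ _ _ fun j => by
    change (φ j).hom₂ ≫ T'.mor₂ ≫ f = (φ j).hom₂ ≫ 0
    rw [← (φ j).comm₂_assoc, hf, comp_zero, comp_zero]
  obtain ⟨a, rfl⟩ := T'.yoneda_exact₃ hT' f hf₂
  have ha (j : J) : (T j).mor₃ ≫ (φ j).hom₁⟦(1 : ℤ)⟧' ≫ a = 0 := by
    rw [(φ j).comm₃_assoc, hf]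
  choose b hb using fun j =>
    (T j).rotate.yoneda_exact₃ (rot_of_distTriang _ (hT j)) _ (ha j)
  obtain ⟨b', hb'⟩ : ∃ b', ∀ j, (φ j).hom₂⟦(1 : ℤ)⟧' ≫ b' = b j :=
    ⟨Cofan.IsColimit.desc h₂' b, Cofan.IsColimit.fac h₂' b⟩
  have ha' : a = T'.rotate.mor₃ ≫ b' := Cofan.IsColimit.hom_ext h₁' _ _ fun j => by
    change (φ j).hom₁⟦(1 : ℤ)⟧' ≫ a = (φ j).hom₁⟦(1 : ℤ)⟧' ≫ T'.rotate.mor₃ ≫ b'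
    rw [hb, ← hb']
    exact ((rotate C).map (φ j)).comm₃_assoc b'
  rw [ha']
  exact (comp_distTriang_mor_zero₂₃_assoc _ (rot_of_distTriang _ hT') b').trans zero_comp

lemma exists_hom₃_comp_eq (hT : ∀ j, T j ∈ distTriang C) (hT' : T' ∈ distTriang C)
    (φ : ∀ j, T j ⟶ T')
    (h₁ : IsColimit (Cofan.mk T'.obj₁ fun j => (φ j).hom₁))
    (h₂ : IsColimit (Cofan.mk T'.obj₂ fun j => (φ j).hom₂))
    {W : C} (f : ∀ j, (T j).obj₃ ⟶ W) :
    ∃ g : T'.obj₃ ⟶ W, ∀ j, (φ j).hom₃ ≫ g = f j := by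
  have h₁' := isColimitCofanMkObjOfIsColimit (shiftFunctor C (1 : ℤ)) _ _ h₁
  obtain ⟨c, hc⟩ : ∃ c, ∀ j, (φ j).hom₂ ≫ c = (T j).mor₂ ≫ f j :=
    ⟨Cofan.IsColimit.desc h₂ _, Cofan.IsColimit.fac h₂ _⟩
  have hc₁ : T'.mor₁ ≫ c = 0 := Cofan.IsColimit.hom_ext h₁ _ _ fun j => by
    change (φ j).hom₁ ≫ T'.mor₁ ≫ c = (φ j).hom₁ ≫ 0
    rw [← (φ j).comm₁_assoc, hc, comp_distTriang_mor_zero₁₂_assoc _ (hT j), zero_comp, comp_zero]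
  obtain ⟨g₀, rfl⟩ := T'.yoneda_exact₂ hT' c hc₁
  have hdiff (j : J) : (T j).mor₂ ≫ (f j - (φ j).hom₃ ≫ g₀) = 0 := by
    rw [Preadditive.comp_sub, (φ j).comm₂_assoc, hc, sub_self]
  choose e he using fun j => (T j).yoneda_exact₃ (hT j) _ (hdiff j)
  obtain ⟨e', he'⟩ : ∃ e', ∀ j, (φ j).hom₁⟦(1 : ℤ)⟧' ≫ e' = e j :=
    ⟨Cofan.IsColimit.desc h₁' e, Cofan.IsColimit.fac h₁' e⟩
  refine ⟨g₀ + T'.mor₃ ≫ e', fun j => ?_⟩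
  rw [Preadditive.comp_add, ← (φ j).comm₃_assoc, he', ← he, add_sub_cancel]

lemma nonempty_isColimit_cofan_obj₃ (hT : ∀ j, T j ∈ distTriang C) (hT' : T' ∈ distTriang C)
    (φ : ∀ j, T j ⟶ T')
    (h₁ : IsColimit (Cofan.mk T'.obj₁ fun j => (φ j).hom₁))
    (h₂ : IsColimit (Cofan.mk T'.obj₂ fun j => (φ j).hom₂)) :
    Nonempty (IsColimit (Cofan.mk T'.obj₃ fun j => (φ j).hom₃)) := by
  choose g hg using fun s : Cofan fun j => (T j).obj₃ =>
    exists_hom₃_comp_eq hT hT' φ h₁ h₂ s.inj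
  refine ⟨Cofan.IsColimit.mk _ g hg fun s m hm => ?_⟩
  refine sub_eq_zero.1 (eq_zero_of_hom₃_comp_eq_zero hT hT' φ h₁ h₂ _ fun j => ?_)
  rw [Preadditive.comp_sub, hg, sub_eq_zero]
  exact hm j

lemma nonempty_isColimit_cofan_obj₁ (hT : ∀ j, T j ∈ distTriang C) (hT' : T' ∈ distTriang C)
    (φ : ∀ j, T j ⟶ T')
    (h₂ : IsColimit (Cofan.mk T'.obj₂ fun j => (φ j).hom₂))
    (h₃ : IsColimit (Cofan.mk T'.obj₃ fun j => (φ j).hom₃)) :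
    Nonempty (IsColimit (Cofan.mk T'.obj₁ fun j => (φ j).hom₁)) :=
  nonempty_isColimit_cofan_obj₃
    (fun j => inv_rot_of_distTriang _ (inv_rot_of_distTriang _ (hT j)))
    (inv_rot_of_distTriang _ (inv_rot_of_distTriang _ hT'))
    (fun j => (invRotate C).map ((invRotate C).map (φ j)))
    (isColimitCofanMkObjOfIsColimit (shiftFunctor C (-1 : ℤ)) _ _ h₂)
    (isColimitCofanMkObjOfIsColimit (shiftFunctor C (-1 : ℤ)) _ _ h₃)

end CoproductOfTriangles

variable {𝒰 𝒱 : Set C}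

namespace TorsionPair

lemma mem_left_of_iso (h : TorsionPair 𝒰 𝒱) {X Y : C} (e : X ≅ Y) (hY : Y ∈ 𝒰) : X ∈ 𝒰 :=
  h.summand_left ⟨e.hom, e.inv, e.hom_inv_id⟩ hY

lemma mem_right_of_iso (h : TorsionPair 𝒰 𝒱) {X Y : C} (e : X ≅ Y) (hY : Y ∈ 𝒱) : X ∈ 𝒱 :=
  h.summand_right ⟨e.hom, e.inv, e.hom_inv_id⟩ hY

lemma mem_left_of_hom_eq_zero (h : TorsionPair 𝒰 𝒱) {X : C}
    (hX : ∀ B ∈ 𝒱, ∀ f : X ⟶ B, f = 0) : X ∈ 𝒰 := by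
  obtain ⟨U, V, hU, hV, f, g, k, hT⟩ := h.exists_triangle X
  obtain ⟨s, hs⟩ := Triangle.coyoneda_exact₂ _ hT (𝟙 X) (hX V hV _)
  exact h.summand_left ⟨s, f, hs.symm⟩ hU

lemma mem_right_of_hom_eq_zero (h : TorsionPair 𝒰 𝒱) {X : C}
    (hX : ∀ B ∈ 𝒰, ∀ f : B ⟶ X, f = 0) : X ∈ 𝒱 := by
  obtain ⟨U, V, hU, hV, f, g, k, hT⟩ := h.exists_triangle X
  obtain ⟨s, hs⟩ := Triangle.yoneda_exact₂ _ hT (𝟙 X) (hX U hU _)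
  exact h.summand_right ⟨g, s, hs.symm⟩ hV

lemma mem_left_of_distTriang (h : TorsionPair 𝒰 𝒱) {T : Triangle C} (hT : T ∈ distTriang C)
    (h₁ : T.obj₁ ∈ 𝒰) (h₃ : T.obj₃ ∈ 𝒰) : T.obj₂ ∈ 𝒰 :=
  h.mem_left_of_hom_eq_zero fun B hB f => by
    obtain ⟨s, rfl⟩ := T.yoneda_exact₂ hT f (h.hom_zero h₁ hB _)
    rw [h.hom_zero h₃ hB s, comp_zero]

lemma shift_mem_left (h : TorsionPair 𝒰 𝒱) (ht : ∀ X ∈ 𝒰, X⟦(1 : ℤ)⟧ ∈ 𝒰)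
    {X : C} (hX : X ∈ 𝒰) (n : ℕ) : X⟦(n : ℤ)⟧ ∈ 𝒰 := by
  induction n with
  | zero => exact h.mem_left_of_iso ((shiftFunctorZero C ℤ).app X) hX
  | succ n ih =>
    exact h.mem_left_of_iso ((shiftFunctorAdd' C (n : ℤ) 1 _ (by simp)).app X) (ht _ ih)

lemma shift_neg_mem_right (h : TorsionPair 𝒰 𝒱) (ht : ∀ X ∈ 𝒰, X⟦(1 : ℤ)⟧ ∈ 𝒰)
    {X : C} (hX : X ∈ 𝒱) (n : ℕ) : X⟦(-n : ℤ)⟧ ∈ 𝒱 :=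
  h.mem_right_of_hom_eq_zero fun B hB f => (shiftFunctor C (n : ℤ)).map_injective <| by
    rw [Functor.map_zero]
    exact h.hom_zero (h.shift_mem_left ht hB n)
      (h.mem_right_of_iso ((shiftFunctorCompIsoId C (-n : ℤ) n (by simp)).app X) hX) _

lemma bijective_comp_mor₁ (h : TorsionPair 𝒰 𝒱) (ht : ∀ X ∈ 𝒰, X⟦(1 : ℤ)⟧ ∈ 𝒰)
    {T : Triangle C} (hT : T ∈ distTriang C) (h₃ : T.obj₃ ∈ 𝒱) {B : C} (hB : B ∈ 𝒰) :
    Function.Bijective (fun g : B ⟶ T.obj₁ => g ≫ T.mor₁) := by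
  refine ⟨fun g g' hg => sub_eq_zero.1 ?_, fun f => ?_⟩
  · have hsub : (g - g') ≫ T.mor₁ = 0 := by
      rw [Preadditive.sub_comp, sub_eq_zero]
      exact hg
    obtain ⟨s, hs⟩ := Triangle.coyoneda_exact₂ _ (inv_rot_of_distTriang _ hT) (g - g') hsub
    have hs₀ : s = 0 := h.hom_zero hB (h.shift_neg_mem_right ht h₃ 1) s
    rw [hs, hs₀]
    exact zero_comp
  · obtain ⟨s, hs⟩ := T.coyoneda_exact₂ hT f (h.hom_zero hB h₃ _)
    exact ⟨s, hs.symm⟩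

end TorsionPair

namespace TruncationFunctors

lemma v_hom_ext (d : TruncationFunctors 𝒰 𝒱) {X B : C} (hB : B ∈ 𝒱) {f g : d.v.obj X ⟶ B}
    (hfg : d.π.app X ≫ f = d.π.app X ≫ g) : f = g :=
  (d.adj_v X B hB).1 hfg

lemma u_hom_ext (d : TruncationFunctors 𝒰 𝒱) {A X : C} (hA : A ∈ 𝒰) {f g : A ⟶ d.u.obj X}
    (hfg : f ≫ d.ι.app X = g ≫ d.ι.app X) : f = g :=
  (d.adj_u A X hA).1 hfg

lemma isZero_u_iff (d : TruncationFunctors 𝒰 𝒱) (h : TorsionPair 𝒰 𝒱) {X : C} :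
    IsZero (d.u.obj X) ↔ X ∈ 𝒱 := by
  refine ⟨fun hX => h.mem_right_of_hom_eq_zero fun B hB f => ?_, fun hX => ?_⟩
  · obtain ⟨s, rfl⟩ := (d.adj_u B X hB).2 f
    exact hX.eq_zero_of_tgt s ▸ zero_comp
  · rw [IsZero.iff_id_eq_zero]
    exact d.u_hom_ext (d.mem_u X) ((h.hom_zero (d.mem_u X) hX _).trans zero_comp.symm)

lemma isZero_v_iff (d : TruncationFunctors 𝒰 𝒱) (h : TorsionPair 𝒰 𝒱) {X : C} :
    IsZero (d.v.obj X) ↔ X ∈ 𝒰 := by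
  refine ⟨fun hX => h.mem_left_of_hom_eq_zero fun B hB f => ?_, fun hX => ?_⟩
  · obtain ⟨s, rfl⟩ := (d.adj_v X B hB).2 f
    exact hX.eq_zero_of_src s ▸ comp_zero
  · rw [IsZero.iff_id_eq_zero]
    exact d.v_hom_ext (d.mem_v X) ((h.hom_zero hX (d.mem_v X) _).trans comp_zero.symm)

lemma nonempty_iso_u (d : TruncationFunctors 𝒰 𝒱) (h : TorsionPair 𝒰 𝒱)
    (ht : ∀ X ∈ 𝒰, X⟦(1 : ℤ)⟧ ∈ 𝒰) {T : Triangle C} (hT : T ∈ distTriang C)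
    (h₁ : T.obj₁ ∈ 𝒰) (h₃ : T.obj₃ ∈ 𝒱) : Nonempty (T.obj₁ ≅ d.u.obj T.obj₂) := by
  obtain ⟨s, hs : s ≫ d.ι.app T.obj₂ = T.mor₁⟩ := (d.adj_u T.obj₁ T.obj₂ h₁).2 T.mor₁
  obtain ⟨t, ht' : t ≫ T.mor₁ = d.ι.app T.obj₂⟩ :=
    (h.bijective_comp_mor₁ ht hT h₃ (d.mem_u T.obj₂)).2 (d.ι.app T.obj₂)
  exact ⟨⟨s, t, (h.bijective_comp_mor₁ ht hT h₃ h₁).1 (by simp [ht', hs]),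
    d.u_hom_ext (d.mem_u T.obj₂) (by simp [ht', hs])⟩⟩

lemma nonempty_iso_u_shift_neg (d : TruncationFunctors 𝒰 𝒱) (h : TorsionPair 𝒰 𝒱)
    (ht : ∀ X ∈ 𝒰, X⟦(1 : ℤ)⟧ ∈ 𝒰) (X : C) (n : ℕ) (hX : (d.u.obj X)⟦(-n : ℤ)⟧ ∈ 𝒰) :
    Nonempty ((d.u.obj X)⟦(-n : ℤ)⟧ ≅ d.u.obj (X⟦(-n : ℤ)⟧)) :=
  d.nonempty_iso_u h ht (Triangle.shift_distinguished _ (d.triangle X) (-n : ℤ)) hX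
    (h.shift_neg_mem_right ht (d.mem_v X) n)

lemma δ_naturality (d : TruncationFunctors 𝒰 𝒱) {X Y : C} (f : X ⟶ Y) :
    d.δ X ≫ (d.u.map f)⟦(1 : ℤ)⟧' = d.v.map f ≫ d.δ Y := by
  obtain ⟨c, hπ : d.π.app X ≫ c = f ≫ d.π.app Y, hδ⟩ :=
    complete_distinguished_triangle_morphism _ _ (d.triangle X) (d.triangle Y)
      (d.u.map f) f (d.ι.naturality f).symm
  obtain rfl : c = d.v.map f := d.v_hom_ext (d.mem_v Y) (hπ.trans (d.π.naturality f))
  exact hδ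

/-- The truncation triangle `u(X) ⟶ X ⟶ v(X) ⟶ u(X)⟦1⟧`, as a functor of `X`. -/
def truncationTriangle (d : TruncationFunctors 𝒰 𝒱) : C ⥤ Triangle C where
  obj X := Triangle.mk (d.ι.app X) (d.π.app X) (d.δ X)
  map f := Triangle.homMk _ _ (d.u.map f) f (d.v.map f)
    (d.ι.naturality f).symm (d.π.naturality f).symm (d.δ_naturality f)

lemma isCoproductIn_v (d : TruncationFunctors 𝒰 𝒱) {J : Type w} {A : J → C} {P : C}
    {ι : ∀ j, A j ⟶ P} (hι : IsColimit (Cofan.mk P ι)) :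
    IsCoproductIn 𝒱 fun j => d.v.map (ι j) := by
  intro W hW f
  obtain ⟨g₀, hg₀⟩ : ∃ g₀, ∀ j, ι j ≫ g₀ = d.π.app (A j) ≫ f j :=
    ⟨Cofan.IsColimit.desc hι _, Cofan.IsColimit.fac hι _⟩
  obtain ⟨g, rfl⟩ := (d.adj_v P W hW).2 g₀
  have nat (j : J) : d.π.app (A j) ≫ d.v.map (ι j) = ι j ≫ d.π.app P :=
    (d.π.naturality (ι j)).symm
  refine ⟨g, fun j => d.v_hom_ext hW ?_, fun g' hg' => d.v_hom_ext hW ?_⟩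
  · rw [reassoc_of% nat, hg₀]
  · refine Cofan.IsColimit.hom_ext hι _ _ fun j => ?_
    change ι j ≫ d.π.app P ≫ g' = ι j ≫ d.π.app P ≫ g
    rw [hg₀, ← hg', reassoc_of% nat]

lemma preservesColimit_v_of_sigma_mem (d : TruncationFunctors 𝒰 𝒱) {J : Type w} (X : J → C)
    [HasCoproduct X] [HasCoproduct fun j => d.v.obj (X j)]
    (hX : (∐ fun j => d.v.obj (X j)) ∈ 𝒱) : PreservesColimit (Discrete.functor X) d.v := by
  have hv := d.isCoproductIn_v (coproductIsCoproduct X)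
  obtain ⟨s, hs, -⟩ := hv _ hX (Sigma.ι fun j => d.v.obj (X j))
  dsimp only at hs
  have : IsIso (sigmaComparison d.v X) :=
    ⟨s, Sigma.hom_ext _ _ fun j => by simp [hs],
      hv.hom_ext (d.mem_v _) fun j => by simp [reassoc_of% hs]⟩
  exact PreservesCoproduct.of_iso_comparison d.v X

lemma preservesColimit_u_of_preservesColimit_v (d : TruncationFunctors 𝒰 𝒱) {J : Type w}
    (X : J → C) [HasCoproduct X] [PreservesColimit (Discrete.functor X) d.v] :
    PreservesColimit (Discrete.functor X) d.u := by
  obtain ⟨hu⟩ := nonempty_isColimit_cofan_obj₁ (fun j => d.triangle (X j)) (d.triangle (∐ X))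
    (fun j => d.truncationTriangle.map (Sigma.ι X j)) (coproductIsCoproduct X)
    (isColimitOfHasCoproductOfPreservesColimit d.v X)
  exact preservesColimit_of_preserves_colimit_cocone (coproductIsCoproduct X)
    ((isColimitMapCoconeCofanMkEquiv d.u X (Sigma.ι X)).symm hu)

lemma preservesColimitsOfShape_u (d : TruncationFunctors 𝒰 𝒱) {J : Type w}
    [HasCoproductsOfShape J C] (hV : ∀ X : J → C, (∀ j, X j ∈ 𝒱) → (∐ X) ∈ 𝒱) :
    PreservesColimitsOfShape (Discrete J) d.u := by
  have (X : J → C) : PreservesColimit (Discrete.functor X) d.u := by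
    have := d.preservesColimit_v_of_sigma_mem X (hV _ fun j => d.mem_v (X j))
    exact d.preservesColimit_u_of_preservesColimit_v X
  exact preservesColimitsOfShape_of_discrete d.u

end TruncationFunctors

namespace TorsionPair

lemma isZero_H0_iff (h : TorsionPair 𝒰 𝒱) (d : TruncationFunctors 𝒰 𝒱) (X : C) :
    IsZero ((H0 d).obj X) ↔ (d.u.obj (X⟦(1 : ℤ)⟧))⟦(-1 : ℤ)⟧ ∈ 𝒰 :=
  d.isZero_v_iff h

lemma isZero_H0_of_shift_mem_right (h : TorsionPair 𝒰 𝒱) (d : TruncationFunctors 𝒰 𝒱)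
    {X : C} (hX : X⟦(1 : ℤ)⟧ ∈ 𝒱) : IsZero ((H0 d).obj X) := by
  have hu : IsZero ((d.u.obj (X⟦(1 : ℤ)⟧))⟦(-1 : ℤ)⟧) :=
    (shiftFunctor C (-1 : ℤ)).map_isZero ((d.isZero_u_iff h).2 hX)
  exact (h.isZero_H0_iff d X).2 (h.mem_left_of_hom_eq_zero fun _ _ _ => hu.eq_of_src _ _)

lemma H0_obj_mem_heart (h : TorsionPair 𝒰 𝒱) (ht : ∀ X ∈ 𝒰, X⟦(1 : ℤ)⟧ ∈ 𝒰)
    (d : TruncationFunctors 𝒰 𝒱) (X : C) : (H0 d).obj X ∈ heart 𝒰 𝒱 := by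
  let P : C := (d.u.obj (X⟦(1 : ℤ)⟧))⟦(-1 : ℤ)⟧
  have hP : P⟦(1 : ℤ)⟧ ∈ 𝒰 :=
    h.mem_left_of_iso ((shiftFunctorCompIsoId C (-1 : ℤ) 1 (by simp)).app _) (d.mem_u _)
  have hvP : (d.v.obj P)⟦(1 : ℤ)⟧ ∈ 𝒰 :=
    h.mem_left_of_distTriang
      (Triangle.shift_distinguished _ (rot_of_distTriang _ (d.triangle P)) 1) hP
      (ht _ (ht _ (d.mem_u P)))
  exact ⟨hvP, d.mem_v P⟩

lemma isZero_H0_shift_neg_of_mem_right (h : TorsionPair 𝒰 𝒱)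
    (ht : ∀ X ∈ 𝒰, X⟦(1 : ℤ)⟧ ∈ 𝒰) (d : TruncationFunctors 𝒰 𝒱) {X : C} (hX : X ∈ 𝒱) (n : ℕ) :
    IsZero ((H0 d).obj (X⟦(-(n + 1 : ℕ) : ℤ)⟧)) :=
  h.isZero_H0_of_shift_mem_right d <| h.mem_right_of_iso
    ((shiftFunctorAdd' C (-(n + 1 : ℕ) : ℤ) 1 (-n : ℤ) (by grind)).app X).symm
    (h.shift_neg_mem_right ht hX n)

lemma shift_neg_u_mem_left (h : TorsionPair 𝒰 𝒱) (ht : ∀ X ∈ 𝒰, X⟦(1 : ℤ)⟧ ∈ 𝒰)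
    (d : TruncationFunctors 𝒰 𝒱) {X : C}
    (hX : ∀ n : ℕ, IsZero ((H0 d).obj (X⟦(-(n + 1 : ℕ) : ℤ)⟧))) (n : ℕ) :
    (d.u.obj X)⟦(-n : ℤ)⟧ ∈ 𝒰 := by
  induction n with
  | zero => exact h.shift_mem_left ht (d.mem_u X) 0
  | succ n ih =>
    obtain ⟨e⟩ := d.nonempty_iso_u_shift_neg h ht X n ih
    let eX : X⟦(-n : ℤ)⟧ ≅ (X⟦(-(n + 1 : ℕ) : ℤ)⟧)⟦(1 : ℤ)⟧ :=
      (shiftFunctorAdd' C (-(n + 1 : ℕ) : ℤ) 1 (-n : ℤ) (by grind)).app X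
    let eu : (d.u.obj X)⟦(-(n + 1 : ℕ) : ℤ)⟧ ≅ ((d.u.obj X)⟦(-n : ℤ)⟧)⟦(-1 : ℤ)⟧ :=
      (shiftFunctorAdd' C (-n : ℤ) (-1) (-(n + 1 : ℕ) : ℤ) (by grind)).app _
    exact h.mem_left_of_iso (eu ≪≫ (shiftFunctor C (-1 : ℤ)).mapIso (e ≪≫ d.u.mapIso eX))
      ((h.isZero_H0_iff d _).1 (hX n))

lemma mem_right_of_isZero_H0_shift_neg (h : TorsionPair 𝒰 𝒱) (ht : ∀ X ∈ 𝒰, X⟦(1 : ℤ)⟧ ∈ 𝒰)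
    (hnd : ∀ X : C, (∀ n : ℤ, X⟦n⟧ ∈ 𝒰) → IsZero X) (d : TruncationFunctors 𝒰 𝒱) {X : C}
    (hX : ∀ n : ℕ, IsZero ((H0 d).obj (X⟦(-(n + 1 : ℕ) : ℤ)⟧))) : X ∈ 𝒱 := by
  refine (d.isZero_u_iff h).1 (hnd _ fun n => ?_)
  obtain ⟨n, rfl | rfl⟩ := n.eq_nat_or_neg
  · exact h.shift_mem_left ht (d.mem_u X) n
  · exact h.shift_neg_u_mem_left ht d hX n

end TorsionPair

lemma TruncationFunctors.isCoproductIn_heart_H0 (d : TruncationFunctors 𝒰 𝒱) {J : Type w}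
    (X : J → C) [HasCoproduct X] [PreservesColimitsOfShape (Discrete J) d.u] :
    IsCoproductIn (heart 𝒰 𝒱) fun j => (H0 d).map (Sigma.ι X j) :=
  (d.isCoproductIn_v (isColimitOfHasCoproductOfPreservesColimit
    (shiftFunctor C (1 : ℤ) ⋙ d.u ⋙ shiftFunctor C (-1 : ℤ)) X)).anti fun _ hW => hW.2

theorem stmt10_general {J : Type w} [HasCoproductsOfShape J C] (h : TorsionPair 𝒰 𝒱)
    (ht : ∀ X ∈ 𝒰, X⟦(1 : ℤ)⟧ ∈ 𝒰) (hnd : ∀ X : C, (∀ n : ℤ, X⟦n⟧ ∈ 𝒰) → IsZero X)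
    (d : TruncationFunctors 𝒰 𝒱) :
    (∀ X : J → C, IsCoproductIn (heart 𝒰 𝒱) fun j => (H0 d).map (Sigma.ι X j)) ↔
      ∀ X : J → C, (∀ j, X j ∈ 𝒱) → (∐ X) ∈ 𝒱 := by
  refine ⟨fun hH X hX => h.mem_right_of_isZero_H0_shift_neg ht hnd d fun n => ?_,
    fun hV X => ?_⟩
  · let S := shiftFunctor C (-(n + 1 : ℕ) : ℤ)
    have hz : IsZero ((H0 d).obj (∐ fun j => S.obj (X j))) :=
      (hH _).isZero (h.H0_obj_mem_heart ht d _)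
        fun j => h.isZero_H0_shift_neg_of_mem_right ht d (hX j) n
    exact hz.of_iso ((H0 d).mapIso (PreservesCoproduct.iso S X))
  · have := d.preservesColimitsOfShape_u hV
    exact d.isCoproductIn_heart_H0 X

/-- For a nondegenerate t-structure `(𝒰, 𝒱)` in a triangulated category with coproducts,
the cohomological functor `H⁰` preserves coproducts (i.e. `H⁰(∐ Xᵢ)`, with the images of the
coproduct inclusions, is the coproduct of the `H⁰(Xᵢ)` in the heart) if and only if `𝒱` is
closed under coproducts taken in `T`. -/
theorem stmt10 [HasCoproducts.{w} C] (𝒰 𝒱 : Set C) (h : TorsionPair 𝒰 𝒱)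
    (ht : ∀ X ∈ 𝒰, X⟦(1 : ℤ)⟧ ∈ 𝒰)
    (hnd₁ : ∀ X : C, (∀ n : ℤ, X⟦n⟧ ∈ 𝒰) → IsZero X)
    (hnd₂ : ∀ X : C, (∀ n : ℤ, X⟦n⟧ ∈ 𝒱) → IsZero X)
    (d : TruncationFunctors 𝒰 𝒱) :
    (∀ (I : Type w) (X : I → C) (W : C), W ∈ heart 𝒰 𝒱 →
        ∀ f : ∀ i, (H0 d).obj (X i) ⟶ W,
          ∃! g : (H0 d).obj (∐ X) ⟶ W, ∀ i, (H0 d).map (Sigma.ι X i) ≫ g = f i) ↔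
      (∀ (I : Type w) (X : I → C), (∀ i, X i ∈ 𝒱) → (∐ X) ∈ 𝒱) :=
  forall_congr' fun _ => stmt10_general h ht hnd₁ d
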